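/- arXiv:2604.25643 — 4 statements merged into one kernel-verified Lean document; each statement's English description precedes it below -/
import Mathlib

section
/- Let j ≥ 1, u ∈ C^{j+1}(ℝⁿ; ℝ) and f ∈ C^{j}(ℝⁿ; ℝⁿ). Then for every ξ ∈ ℝⁿ, D^j( x ↦ ∇u(x)ᵀ f(x) )(ξ) = Σ_{i=0}^{j} Sym_{i,j−i}( D^{i+1} u(ξ) *_{1,1} D^{j−i} f(ξ) ), where ∇u denotes the gradient of u, so that D^i(∇u) = D^{i+1} u as tensors. -/
open scoped BigOperators

/-- The set `S_{i,j}` of `(i,j)`-shuffles, realized as the permutations of `Fin k`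
(with `k = i + j`) that are strictly increasing on the first `i` positions and on the
remaining positions. -/
def shuffles (k i : ℕ) : Finset (Equiv.Perm (Fin k)) :=
  Finset.univ.filter fun σ =>
    (∀ a b : Fin k, a < b → (b : ℕ) < i → σ a < σ b) ∧
    (∀ a b : Fin k, a < b → i ≤ (a : ℕ) → σ a < σ b)

/-- Entry of the order-`k` derivative tensor of `u : ℝⁿ → ℝ` at `ξ`. -/
noncomputable def Dt (n k : ℕ) (u : (Fin n → ℝ) → ℝ) (ξ : Fin n → ℝ)
    (idx : Fin k → Fin n) : ℝ :=
  iteratedFDeriv ℝ k u ξ fun r => Pi.single (idx r) 1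

/-- Inclusion of the first block `{0, …, i-1}` into `Fin k`. -/
def finL {k : ℕ} (i : ℕ) (h : i ≤ k) (r : Fin i) : Fin k := Fin.castLE h r

/-- Inclusion of the second block into `Fin k`, shifting by `i`. -/
def finR {k : ℕ} (i : ℕ) {l : ℕ} (h : i + l = k) (r : Fin l) : Fin k :=
  ⟨i + r.1, by have := r.2; omega⟩

/-- Iterated directional derivative along a list of vectors (head is outermost). -/
noncomputable def dl {E : Type*} [NormedAddCommGroup E] [NormedSpace ℝ E] :
    List E → (E → ℝ) → E → ℝ
  | [], g => g
  | v :: l, g => fun x => fderiv ℝ (dl l g) x v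

section helpers
variable {E : Type*} [NormedAddCommGroup E] [NormedSpace ℝ E]

theorem dl_contDiff (l : List E) (g : E → ℝ) (m : ℕ)
    (h : ContDiff ℝ ((m + l.length : ℕ) : WithTop ℕ∞) g) :
    ContDiff ℝ (m : WithTop ℕ∞) (dl l g) := by
  induction l generalizing m with
  | nil => simpa [dl] using h
  | cons v l ih =>
    have h1 := ih (m + 1) (by
      have e : m + 1 + l.length = m + (v :: l).length := by simp; omega
      rw [e]; exact h)
    have h2 : ContDiff ℝ (m : WithTop ℕ∞) (fderiv ℝ (dl l g)) :=
      h1.fderiv_right (by push_cast; rfl)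
    exact h2.clm_apply contDiff_const

theorem dl_differentiable (l : List E) (g : E → ℝ) (k : ℕ) (hk : l.length + 1 ≤ k)
    (h : ContDiff ℝ (k : WithTop ℕ∞) g) : Differentiable ℝ (dl l g) := by
  refine (dl_contDiff l g 1 (h.of_le ?_)).differentiable (by simp)
  exact_mod_cast (by omega : 1 + l.length ≤ k)

theorem iteratedFDeriv_eq_dl (k : ℕ) (g : E → ℝ) (h : ContDiff ℝ (k : WithTop ℕ∞) g)
    (v : Fin k → E) (x : E) :
    iteratedFDeriv ℝ k g x v = dl (List.ofFn v) g x := by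
  induction k generalizing x with
  | zero => simp [dl]
  | succ k ih =>
    rw [iteratedFDeriv_succ_apply_left, List.ofFn_succ, dl]
    have hk : ContDiff ℝ (k : WithTop ℕ∞) g := h.of_le (by exact_mod_cast Nat.le_succ k)
    have e : dl (List.ofFn fun i : Fin k => v i.succ) g =
        fun y => iteratedFDeriv ℝ k g y (Fin.tail v) := by
      funext y
      rw [ih hk]; rfl
    rw [e]
    have hd : DifferentiableAt ℝ (iteratedFDeriv ℝ k g) x :=
      (h.differentiable_iteratedFDeriv (by exact_mod_cast Nat.lt_succ_self k)) x
    exact (fderiv_continuousMultilinear_apply_const_apply hd _ _).symm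

theorem dl_append_singleton (l : List E) (s : E) (g : E → ℝ) :
    dl (l ++ [s]) g = dl l (dl [s] g) := by
  induction l with
  | nil => rfl
  | cons v l ih => simp only [List.cons_append, dl] at *; rw [ih]

theorem dl_swap (s t : E) (l : List E) (g : E → ℝ)
    (h : ContDiff ℝ ((2 + l.length : ℕ) : WithTop ℕ∞) g) :
    dl (s :: t :: l) g = dl (t :: s :: l) g := by
  have h2 := dl_contDiff l g 2 h
  funext x
  have hs : IsSymmSndFDerivAt ℝ (dl l g) x := h2.contDiffAt.isSymmSndFDerivAt (by simp)
  have hd : DifferentiableAt ℝ (fderiv ℝ (dl l g)) x :=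
    ((h2.fderiv_right (m := 1) (by norm_num [one_add_one_eq_two])).differentiable (by simp)) x
  simp only [dl]
  rw [fderiv_clm_apply hd (by fun_prop), fderiv_clm_apply hd (by fun_prop)]
  simpa using hs.eq s t

theorem dl_rotate (s : E) (l : List E) (g : E → ℝ)
    (h : ContDiff ℝ ((1 + l.length : ℕ) : WithTop ℕ∞) g) :
    dl (s :: l) g = dl l (dl [s] g) := by
  rw [← dl_append_singleton]
  induction l with
  | nil => rfl
  | cons v l ih =>
    rw [dl_swap s v l g (by
      have e : 2 + l.length = 1 + (v :: l).length := by simp; omega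
      rw [e]; exact h)]
    have := ih (h.of_le (by exact_mod_cast (by simp)))
    rw [List.cons_append]
    rw [dl, this]; rfl

theorem dl_sum {ι : Type*} (S : Finset ι) (l : List E) (G : ι → E → ℝ)
    (h : ∀ i ∈ S, ContDiff ℝ (l.length : WithTop ℕ∞) (G i)) :
    dl l (fun x => ∑ i ∈ S, G i x) = fun x => ∑ i ∈ S, dl l (G i) x := by
  induction l with
  | nil => rfl
  | cons v l ih =>
    funext x
    rw [dl, ih (fun i hi => (h i hi).of_le (by exact_mod_cast (by simp)))]
    beta_reduce
    rw [fderiv_fun_sum (fun i hi => dl_differentiable l _ _ (by simp) (h i hi) x)]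
    simp [dl]

theorem dl_mul (k : ℕ) (v : Fin k → E) (a b : E → ℝ)
    (ha : ContDiff ℝ (k : WithTop ℕ∞) a) (hb : ContDiff ℝ (k : WithTop ℕ∞) b) :
    dl ((List.finRange k).map v) (fun x => a x * b x) = fun x =>
      ∑ p : Fin k → Bool, dl (((List.finRange k).filter (fun r => p r)).map v) a x *
        dl (((List.finRange k).filter (fun r => !p r)).map v) b x := by
  induction k with
  | zero => funext x; simp [dl]
  | succ k ih =>
    funext x
    have hle : ((k : ℕ) : WithTop ℕ∞) ≤ ((k + 1 : ℕ) : WithTop ℕ∞) := by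
      exact_mod_cast Nat.le_succ k
    have hlen : ∀ (q : Fin k → Bool),
        (((List.finRange k).filter q).map (v ∘ Fin.succ)).length + 1 ≤ k + 1 := by
      intro q
      have := List.length_filter_le q (List.finRange k)
      simpa using this
    have hA : ∀ q : Fin k → Bool,
        DifferentiableAt ℝ (dl (((List.finRange k).filter q).map (v ∘ Fin.succ)) a) x :=
      fun q => dl_differentiable _ _ _ (hlen q) ha x
    have hB : ∀ q : Fin k → Bool,
        DifferentiableAt ℝ (dl (((List.finRange k).filter q).map (v ∘ Fin.succ)) b) x :=
      fun q => dl_differentiable _ _ _ (hlen q) hb x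
    rw [List.finRange_succ, List.map_cons, List.map_map, dl,
      ih (v ∘ Fin.succ) (ha.of_le hle) (hb.of_le hle)]
    beta_reduce
    rw [fderiv_fun_sum (fun p _ => (hA _).fun_mul (hB _))]
    rw [← (Fin.consEquiv (fun _ : Fin (k+1) => Bool)).sum_comp, Fintype.sum_prod_type]
    rw [Fintype.sum_bool, ← Finset.sum_add_distrib, ContinuousLinearMap.sum_apply]
    refine Finset.sum_congr rfl fun p _ => ?_
    rw [fderiv_fun_mul (hA _) (hB _)]
    simp [Fin.consEquiv, List.filter_cons, List.filter_map, Function.comp_def, dl]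
    ring

end helpers

theorem filter_eq_of_sorted {k m : ℕ} (q : Fin k → Bool) (g : Fin m → Fin k)
    (hg : StrictMono g) (hq : ∀ x, q x = true ↔ ∃ r, g r = x) :
    (List.finRange k).filter q = (List.finRange m).map g := by
  have p1 : ((List.finRange k).filter q).Pairwise (· < ·) :=
    (List.pairwise_lt_finRange k).filter _
  have p2 : ((List.finRange m).map g).Pairwise (· < ·) :=
    List.pairwise_map.2 ((List.pairwise_lt_finRange m).imp fun h => hg h)
  refine List.Perm.eq_of_pairwise (le := (· < ·)) ?_ p1 p2 ?_
  · intro a b _ _ h1 h2; exact absurd h1 (lt_asymm h2)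
  · refine (List.perm_ext_iff_of_nodup (p1.imp ne_of_lt) (p2.imp ne_of_lt)).2 ?_
    intro x; simp [hq]

theorem shuffle_mono {k i : ℕ} {σ : Equiv.Perm (Fin k)} (hσ : σ ∈ shuffles k i)
    (hi : i ≤ k) {l : ℕ} (hl : i + l = k) :
    StrictMono (fun r => σ (finL i hi r)) ∧ StrictMono (fun r : Fin l => σ (finR i hl r)) := by
  simp only [shuffles, Finset.mem_filter] at hσ
  constructor
  · intro a b hab
    exact hσ.2.1 _ _ (by simpa [finL] using hab) (by simp [finL])
  · intro a b hab
    exact hσ.2.2 _ _ (by simpa [finR] using hab) (by simp [finR])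

theorem shuffle_filterL {k i : ℕ} {σ : Equiv.Perm (Fin k)} (hσ : σ ∈ shuffles k i)
    (hi : i ≤ k) :
    (List.finRange k).filter (fun x => decide ((σ.symm x : ℕ) < i)) =
      (List.finRange i).map (fun r => σ (finL i hi r)) := by
  refine filter_eq_of_sorted _ _ (shuffle_mono hσ hi (Nat.add_sub_cancel' hi)).1 fun x => ?_
  simp only [decide_eq_true_eq]
  constructor
  · intro h
    refine ⟨⟨_, h⟩, ?_⟩
    rw [← Equiv.eq_symm_apply]; rfl
  · rintro ⟨r, rfl⟩; simp [finL]

theorem shuffle_filterR {k i : ℕ} {σ : Equiv.Perm (Fin k)} (hσ : σ ∈ shuffles k i)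
    (hi : i ≤ k) {l : ℕ} (hl : i + l = k) :
    (List.finRange k).filter (fun x => !decide ((σ.symm x : ℕ) < i)) =
      (List.finRange l).map (fun r => σ (finR i hl r)) := by
  refine filter_eq_of_sorted _ _ (shuffle_mono hσ hi hl).2 fun x => ?_
  simp only [Bool.not_eq_true', decide_eq_false_iff_not, not_lt]
  constructor
  · intro h
    refine ⟨⟨(σ.symm x : ℕ) - i, by have := (σ.symm x).isLt; omega⟩, ?_⟩
    rw [← Equiv.eq_symm_apply]
    apply Fin.ext; simp [finR]; omega
  · rintro ⟨r, rfl⟩; simp [finR]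

theorem shuffle_surj {k : ℕ} (p : Fin k → Bool) :
    ∃ i, i ≤ k ∧ ∃ σ ∈ shuffles k i, (fun x => decide ((σ.symm x : ℕ) < i)) = p := by
  classical
  let A : Finset (Fin k) := Finset.univ.filter fun x => p x = true
  have hc : A.card + Aᶜ.card = k := by simpa using Finset.card_add_card_compl A
  let e : Fin A.card ⊕ Fin Aᶜ.card ≃ Fin k := finSumEquivOfFinset rfl rfl
  let τ : Fin k ≃ Fin A.card ⊕ Fin Aᶜ.card := (finCongr hc.symm).trans finSumFinEquiv.symm
  have hL : ∀ (a : Fin k) (h : (a : ℕ) < A.card), τ a = Sum.inl ⟨a, h⟩ := by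
    intro a h
    rw [← Equiv.eq_symm_apply]
    apply Fin.ext; simp [τ]
  have hR : ∀ (a : Fin k) (h : A.card ≤ (a : ℕ)),
      τ a = Sum.inr ⟨a - A.card, by have := a.isLt; omega⟩ := by
    intro a h
    rw [← Equiv.eq_symm_apply]
    apply Fin.ext; simp [τ]; omega
  refine ⟨A.card, by omega, τ.trans e, ?_, ?_⟩
  · simp only [shuffles, Finset.mem_filter, Finset.mem_univ, true_and]
    constructor
    · intro a b hab hb
      have ha : (a : ℕ) < A.card := lt_trans hab hb
      simp only [Equiv.trans_apply, hL a ha, hL b hb, e, finSumEquivOfFinset_inl]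
      simpa using hab
    · intro a b hab ha
      have hab' : (a : ℕ) < b := hab
      have hb : A.card ≤ (b : ℕ) := by omega
      simp only [Equiv.trans_apply, hR a ha, hR b hb, e, finSumEquivOfFinset_inr]
      simp only [OrderEmbedding.lt_iff_lt, Fin.mk_lt_mk]
      omega
  · funext x
    obtain ⟨a, rfl⟩ := (τ.trans e).surjective x
    rw [Equiv.symm_apply_apply]
    by_cases h : (a : ℕ) < A.card
    · have : (τ.trans e) a ∈ A := by
        simp only [Equiv.trans_apply, hL a h, e, finSumEquivOfFinset_inl]
        exact Finset.orderEmbOfFin_mem _ _ _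
      have h2 : p ((τ.trans e) a) = true := (Finset.mem_filter.1 this).2
      rw [h2]; simpa using h
    · have : (τ.trans e) a ∈ Aᶜ := by
        simp only [Equiv.trans_apply, hR a (not_lt.1 h), e, finSumEquivOfFinset_inr]
        exact Finset.orderEmbOfFin_mem _ _ _
      have h2 : p ((τ.trans e) a) = false := by
        simpa [A] using this
      rw [h2]; simpa using h

theorem shuffle_inj {k i i' : ℕ} (hi : i ≤ k) (hi' : i' ≤ k) {σ σ' : Equiv.Perm (Fin k)}
    (hσ : σ ∈ shuffles k i) (hσ' : σ' ∈ shuffles k i')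
    (h : (fun x => decide ((σ.symm x : ℕ) < i)) = fun x => decide ((σ'.symm x : ℕ) < i')) :
    i = i' ∧ σ = σ' := by
  have h1 := shuffle_filterL hσ hi
  have h1' := shuffle_filterL hσ' hi'
  rw [h, h1'] at h1
  have e : i = i' := by simpa using (congrArg List.length h1).symm
  subst e
  have h2 := shuffle_filterR hσ hi (Nat.add_sub_cancel' hi)
  have h2' := shuffle_filterR hσ' hi (Nat.add_sub_cancel' hi)
  have h3 : ∀ x, decide ((σ.symm x : ℕ) < i) = decide ((σ'.symm x : ℕ) < i) := congrFun h
  simp only [h3] at h2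
  rw [h2'] at h2
  refine ⟨rfl, Equiv.ext fun a => ?_⟩
  rw [List.map_inj_left] at h1 h2
  by_cases ha : (a : ℕ) < i
  · exact (h1 ⟨a, ha⟩ (List.mem_finRange _)).symm
  · have := h2 ⟨a - i, by have := a.isLt; omega⟩ (List.mem_finRange _)
    have e : finR i (Nat.add_sub_cancel' hi) ⟨a - i, by have := a.isLt; omega⟩ = a := by
      apply Fin.ext; simp [finR]; omega
    rw [e] at this
    exact this.symm

/-- For `j ≥ 1`, `u ∈ C^{j+1}(ℝⁿ;ℝ)` and `f ∈ C^{j}(ℝⁿ;ℝⁿ)`,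
`D^j(x ↦ ∇u(x)ᵀ f(x))(ξ) = Σ_{i=0}^{j} Sym_{i,j−i}( D^{i+1}u(ξ) *₁,₁ D^{j−i}f(ξ) )`,
stated entrywise for every multi-index `idx`. -/
theorem deriv_grad_dot_field {n : ℕ} (j : ℕ) (hj : 1 ≤ j)
    (u : (Fin n → ℝ) → ℝ) (f : (Fin n → ℝ) → Fin n → ℝ)
    (hu : ContDiff ℝ ((j + 1 : ℕ) : ℕ∞) u) (hf : ContDiff ℝ (j : ℕ∞) f)
    (ξ : Fin n → ℝ) (idx : Fin j → Fin n) :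
    Dt n j (fun x => ∑ s : Fin n, Dt n 1 u x (fun _ => s) * f x s) ξ idx =
      ∑ i : Fin (j + 1), ∑ σ ∈ shuffles j (i : ℕ), ∑ s : Fin n,
        Dt n ((i : ℕ) + 1) u ξ
            (Fin.cons s fun r : Fin (i : ℕ) =>
              idx (σ (finL (i : ℕ) (by have := i.isLt; omega) r))) *
          Dt n (j - (i : ℕ)) (fun x => f x s) ξ
            (fun r => idx (σ (finR (i : ℕ) (by have := i.isLt; omega) r))) := by
  have hu' : ContDiff ℝ ((j + 1 : ℕ) : WithTop ℕ∞) u := by exact_mod_cast hu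
  have hf' : ContDiff ℝ ((j : ℕ) : WithTop ℕ∞) f := by exact_mod_cast hf
  have hfs : ∀ s, ContDiff ℝ ((j : ℕ) : WithTop ℕ∞) (fun x => f x s) := fun s =>
    contDiff_pi.1 hf' s
  let e : Fin n → (Fin n → ℝ) := fun s => Pi.single s 1
  have hDt : ∀ (k : ℕ) (g : (Fin n → ℝ) → ℝ) (_ : ContDiff ℝ (k : WithTop ℕ∞) g)
      (x : Fin n → ℝ) (id : Fin k → Fin n),
      Dt n k g x id = dl (List.ofFn fun r => e (id r)) g x := fun k g hg x id =>
    iteratedFDeriv_eq_dl k g hg _ x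
  have hus : ∀ s, ContDiff ℝ ((j : ℕ) : WithTop ℕ∞) (dl [e s] u) := fun s =>
    dl_contDiff [e s] u j (by simpa using hu')
  have h1 : ∀ x s, Dt n 1 u x (fun _ => s) = dl [e s] u x := by
    intro x s
    rw [hDt 1 u (hu'.of_le (by exact_mod_cast (by omega)))]
    simp
  simp only [h1]
  rw [hDt j _ (ContDiff.sum fun s _ => (hus s).mul (hfs s)),
    dl_sum _ _ _ (fun s _ => by simpa using (hus s).mul (hfs s))]
  simp only [List.ofFn_eq_map]
  simp only [dl_mul j (fun r => e (idx r)) _ _ (hus _) (hfs _)]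
  rw [Finset.sum_comm]
  symm
  rw [Finset.sum_sigma']
  refine Finset.sum_bij
    (fun (a : (_ : Fin (j + 1)) × Equiv.Perm (Fin j)) _ =>
      (fun x => decide ((a.2.symm x : ℕ) < (a.1 : ℕ)))) ?_ ?_ ?_ ?_
  · intros; exact Finset.mem_univ _
  · rintro ⟨i, σ⟩ ha ⟨i', σ'⟩ ha' h
    have ha := (Finset.mem_sigma.1 ha).2
    have ha' := (Finset.mem_sigma.1 ha').2
    obtain ⟨e1, e2⟩ := shuffle_inj (Nat.lt_succ_iff.1 i.isLt) (Nat.lt_succ_iff.1 i'.isLt) ha ha' h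
    obtain rfl := Fin.ext e1
    obtain rfl := e2
    rfl
  · intro p _
    obtain ⟨i, hi, σ, hσ, h⟩ := shuffle_surj p
    exact ⟨⟨⟨i, by omega⟩, σ⟩, Finset.mem_sigma.2 ⟨Finset.mem_univ _, hσ⟩, h⟩
  · rintro ⟨i, σ⟩ ha
    have ha := (Finset.mem_sigma.1 ha).2
    have hi : (i : ℕ) ≤ j := Nat.lt_succ_iff.1 i.isLt
    refine Finset.sum_congr rfl fun s _ => ?_
    dsimp only at ha ⊢
    rw [shuffle_filterL ha hi, shuffle_filterR ha hi (Nat.add_sub_cancel' hi)]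
    rw [hDt _ _ (hu'.of_le (by exact_mod_cast (by omega))),
      hDt _ _ ((hfs s).of_le (by exact_mod_cast (by omega)))]
    rw [← dl_rotate _ _ _ (hu'.of_le (by
      rw [List.length_map, List.length_map, List.length_finRange]
      exact_mod_cast (by omega)))]
    simp only [List.ofFn_succ, Fin.cons_zero, Fin.cons_succ, List.ofFn_eq_map, List.map_map]
    rfl
end

section
/- Let j ≥ 1, h ∈ C^{j}(ℝⁿ; ℝ^p), let Q ∈ ℝ^{p×p} be symmetric, and let c ∈ ℝ^p be a fixed vector. Then for every ξ ∈ ℝⁿ, D^j( x ↦ (c − h(x))ᵀ Q (c − h(x)) )(ξ) = −2 · D^j h(ξ) *_{1,1} (Q c) + Σ_{i=0}^{j} Sym_{i,j−i}( D^i h(ξ) *_{1,1} ( Q *_{2,1} D^{j−i} h(ξ) ) ), where Q c ∈ ℝ^p is regarded as an order-1 tensor. -/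
open scoped BigOperators
open Matrix

open Finset in
/-- Derivative of `f` in the directions `v` indexed by `s`, in increasing order. -/
noncomputable def PD {E : Type*} [NormedAddCommGroup E] [NormedSpace ℝ E] {k : ℕ}
    (f : E → ℝ) (v : Fin k → E) (s : Finset (Fin k)) (x : E) : ℝ :=
  iteratedFDeriv ℝ s.card f x (fun a => v (s.orderEmbOfFin rfl a))

theorem PD_eq {E : Type*} [NormedAddCommGroup E] [NormedSpace ℝ E] {k : ℕ}
    (f : E → ℝ) (v : Fin k → E) (s : Finset (Fin k)) (x : E) {a : ℕ} (hc : s.card = a)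
    (e : Fin a → Fin k) (he : StrictMono e) (hs : ∀ i, e i ∈ s) :
    iteratedFDeriv ℝ a f x (fun i => v (e i)) = PD f v s x := by
  subst hc
  have := Finset.orderEmbOfFin_unique rfl hs he
  subst this
  rfl

theorem PD_map_succ {E : Type*} [NormedAddCommGroup E] [NormedSpace ℝ E] {k : ℕ}
    (f : E → ℝ) (v : Fin (k+1) → E) (s : Finset (Fin k)) (x : E) :
    PD f (Fin.tail v) s x = PD f v (s.map (Fin.succEmb k)) x := by
  apply PD_eq f v _ x (by simp) (fun i => (s.orderEmbOfFin rfl i).succ)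
  · intro a b hab
    simpa using hab
  · intro i
    simp

theorem PD_insert {E : Type*} [NormedAddCommGroup E] [NormedSpace ℝ E] {k : ℕ}
    (f : E → ℝ) (hf : ContDiff ℝ ((k+1 : ℕ) : ℕ∞) f) (v : Fin (k+1) → E)
    (s : Finset (Fin k)) (x : E) :
    HasFDerivAt (PD f (Fin.tail v) s) (fderiv ℝ (PD f (Fin.tail v) s) x) x ∧
    fderiv ℝ (PD f (Fin.tail v) s) x (v 0) = PD f v (insert 0 (s.map (Fin.succEmb k))) x := by
  have hcard : s.card < k + 1 := by
    have := s.card_le_univ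
    simp at this; omega
  have hd : Differentiable ℝ (fun x => iteratedFDeriv ℝ s.card f x) :=
    ContDiff.differentiable_iteratedFDeriv (by exact_mod_cast hcard) hf
  constructor
  · apply DifferentiableAt.hasFDerivAt
    exact ((hd x).hasFDerivAt.continuousMultilinear_apply_const _).differentiableAt
  · have h1 := fderiv_continuousMultilinear_apply_const_apply (hd x)
      (fun a => Fin.tail v (s.orderEmbOfFin rfl a)) (v 0)
    refine h1.trans ?_
    have h2 := PD_eq f v (insert 0 (s.map (Fin.succEmb k))) x (a := s.card + 1)
      (by rw [Finset.card_insert_of_notMem (by simp)]; simp)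
      (Fin.cons 0 (fun i => (s.orderEmbOfFin rfl i).succ)) ?_ ?_
    · rw [← h2, iteratedFDeriv_succ_apply_left]
      rfl
    · intro a b hab
      induction a using Fin.cases with
      | zero =>
        induction b using Fin.cases with
        | zero => simp at hab
        | succ b => simp
      | succ a =>
        induction b using Fin.cases with
        | zero => simp at hab
        | succ b => simpa using hab
    · intro i
      induction i using Fin.cases with
      | zero => simp
      | succ i => simp

theorem sum_finset_fin_succ {k : ℕ} (F : Finset (Fin (k+1)) → ℝ) :
    ∑ s, F s = ∑ s : Finset (Fin k), F (s.map (Fin.succEmb k)) +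
      ∑ s : Finset (Fin k), F (insert 0 (s.map (Fin.succEmb k))) := by
  have key : ∀ G : Finset (Fin (k+1)) → ℝ,
      ∑ t ∈ (Finset.univ.map (Fin.succEmb k)).powerset, G t
        = ∑ s : Finset (Fin k), G (s.map (Fin.succEmb k)) := by
    intro G
    symm
    apply Finset.sum_bij (fun s _ => s.map (Fin.succEmb k))
    · intro s _
      rw [Finset.mem_powerset]
      exact Finset.map_subset_map.2 (Finset.subset_univ s)
    · intro a _ b _ hab
      exact Finset.map_injective _ hab
    · intro t ht
      rw [Finset.mem_powerset, Finset.subset_map_iff] at ht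
      obtain ⟨u, _, hu⟩ := ht
      exact ⟨u, Finset.mem_univ _, hu.symm⟩
    · intros; rfl
  have hu : (Finset.univ : Finset (Finset (Fin (k+1)))) =
      (insert 0 (Finset.univ.map (Fin.succEmb k))).powerset := by
    ext s
    simp only [Finset.mem_univ, Finset.mem_powerset, true_iff]
    intro a _
    induction a using Fin.cases <;> simp
  rw [hu, Finset.sum_powerset_insert (by simp), key, key (fun t => F (insert 0 t))]

theorem leibniz_finset {E : Type*} [NormedAddCommGroup E] [NormedSpace ℝ E] (k : ℕ)
    (f g : E → ℝ) (hf : ContDiff ℝ (k : ℕ∞) f) (hg : ContDiff ℝ (k : ℕ∞) g)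
    (v : Fin k → E) (x : E) :
    iteratedFDeriv ℝ k (fun y => f y * g y) x v = ∑ s, PD f v s x * PD g v sᶜ x := by
  induction k generalizing x with
  | zero =>
    have : (Finset.univ : Finset (Finset (Fin 0))) = {∅} := by decide
    rw [this]
    have e0 : ∀ (u : E → ℝ) (s : Finset (Fin 0)), PD u v s x = u x := by
      intro u s
      rw [← PD_eq u v s x (a := 0) (by simp [Finset.eq_empty_of_isEmpty]) (fun i => i) (fun a => a.elim0) (fun a => a.elim0)]
      simp
    simp [e0]
  | succ k ih =>
    have hle : ((k : ℕ∞) : WithTop ℕ∞) ≤ ((k + 1 : ℕ) : ℕ∞) := by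
      exact_mod_cast Nat.le_succ k
    have ih' := ih (hf.of_le hle) (hg.of_le hle) (Fin.tail v)
    have hfg : ContDiff ℝ ((k+1 : ℕ) : ℕ∞) (fun y => f y * g y) := hf.mul hg
    have hd : Differentiable ℝ (fun x => iteratedFDeriv ℝ k (fun y => f y * g y) x) :=
      ContDiff.differentiable_iteratedFDeriv (by exact_mod_cast Nat.lt_succ_self k) hfg
    rw [iteratedFDeriv_succ_apply_left,
      ← fderiv_continuousMultilinear_apply_const_apply (hd x), funext ih']
    have hder : HasFDerivAt (fun y => ∑ s, PD f (Fin.tail v) s y * PD g (Fin.tail v) sᶜ y) _ x :=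
      HasFDerivAt.fun_sum (u := Finset.univ) (fun s _ =>
        (PD_insert f hf v s x).1.mul (PD_insert g hg v sᶜ x).1)
    rw [hder.fderiv, sum_finset_fin_succ, ← Finset.sum_add_distrib]
    rw [_root_.sum_apply]
    apply Finset.sum_congr rfl
    intro s _
    have e1 : (s.map (Fin.succEmb k))ᶜ = insert 0 (sᶜ.map (Fin.succEmb k)) := by
      ext a
      induction a using Fin.cases <;> simp
    have e2 : (insert 0 (s.map (Fin.succEmb k)))ᶜ = sᶜ.map (Fin.succEmb k) := by
      ext a
      induction a using Fin.cases <;> simp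
    rw [e1, e2]
    simp only [_root_.add_apply, _root_.smul_apply, smul_eq_mul,
      (PD_insert f hf v s x).2, (PD_insert g hg v sᶜ x).2, PD_map_succ]
    ring

theorem sum_shuffles {j i l : ℕ} (hij : i + l = j) (hi : i ≤ j)
    (F : Finset (Fin j) → ℝ) (G : Equiv.Perm (Fin j) → ℝ)
    (hFG : ∀ σ ∈ shuffles j i, ∀ s : Finset (Fin j), s.card = i → sᶜ.card = l →
      (∀ a, σ (finL i hi a) ∈ s) → (∀ a, σ (finR i hij a) ∈ sᶜ) → G σ = F s) :
    ∑ σ ∈ shuffles j i, G σ = ∑ s ∈ Finset.powersetCard i Finset.univ, F s := by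
  have hLinj : Function.Injective (finL i hi) := fun a b hab => by
    simpa [finL, Fin.ext_iff] using hab
  have hLR : ∀ b : Fin j, (∃ a, finL i hi a = b) ∨ ∃ a, finR i hij a = b := by
    intro b
    by_cases hb : (b : ℕ) < i
    · exact Or.inl ⟨⟨b, hb⟩, by simp [finL, Fin.ext_iff]⟩
    · exact Or.inr ⟨⟨b - i, by omega⟩, by simp [finR, Fin.ext_iff]; omega⟩
  have hne : ∀ a b, finL i hi a ≠ finR i hij b := by
    intro a b hab
    simp [finL, finR, Fin.ext_iff] at hab; omega
  have hcard : ∀ s : Finset (Fin j), s.card = i → sᶜ.card = l := by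
    intro s hs
    rw [Finset.card_compl, hs, Fintype.card_fin]; omega
  have hmonL : ∀ σ ∈ shuffles j i, StrictMono (fun a => σ (finL i hi a)) := by
    intro σ hσ a b hab
    simp only [shuffles, Finset.mem_filter] at hσ
    exact hσ.2.1 _ _ hab b.2
  have hmonR : ∀ σ ∈ shuffles j i, StrictMono (fun a => σ (finR i hij a)) := by
    intro σ hσ a b hab
    simp only [shuffles, Finset.mem_filter] at hσ
    refine hσ.2.2 _ _ ?_ ?_
    · simpa [finR] using hab
    · simp [finR]
  let S : Equiv.Perm (Fin j) → Finset (Fin j) := fun σ =>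
    Finset.univ.image (fun a => σ (finL i hi a))
  have hScard : ∀ σ, (S σ).card = i := by
    intro σ
    simp only [S]
    have hinj : Function.Injective (fun a => σ (finL i hi a)) := σ.injective.comp hLinj
    rw [Finset.card_image_of_injective _ hinj]
    simp
  have hSL : ∀ σ a, σ (finL i hi a) ∈ S σ := fun σ a =>
    Finset.mem_image_of_mem _ (Finset.mem_univ a)
  have hSR : ∀ σ a, σ (finR i hij a) ∈ (S σ)ᶜ := by
    intro σ a
    simp only [S, Finset.mem_compl, Finset.mem_image, not_exists, Finset.mem_univ, true_and]
    intro b hb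
    exact hne _ _ (σ.injective hb)
  apply Finset.sum_bij (fun σ _ => S σ)
  · intro σ _
    simp [Finset.mem_powersetCard, hScard]
  · intro σ hσ τ hτ hst
    have hst : S σ = S τ := hst
    have h1 := Finset.orderEmbOfFin_unique (hScard σ) (hSL σ) (hmonL σ hσ)
    have h2 := Finset.orderEmbOfFin_unique (hScard σ) (by rw [hst]; exact hSL τ) (hmonL τ hτ)
    have h3 := Finset.orderEmbOfFin_unique (hcard _ (hScard σ)) (hSR σ) (hmonR σ hσ)
    have h4 := Finset.orderEmbOfFin_unique (hcard _ (hScard σ)) (by rw [hst]; exact hSR τ)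
      (hmonR τ hτ)
    ext1 b
    rcases hLR b with ⟨a, rfl⟩ | ⟨a, rfl⟩
    · exact congrFun (h1.trans h2.symm) a
    · exact congrFun (h3.trans h4.symm) a
  · intro s hs
    have hs : s.card = i := (Finset.mem_powersetCard.1 hs).2
    let σ : Equiv.Perm (Fin j) :=
      ((finCongr hij.symm).trans finSumFinEquiv.symm).trans (finSumEquivOfFinset hs (hcard s hs))
    have hσL : ∀ a, σ (finL i hi a) = s.orderEmbOfFin hs a := by
      intro a
      have : (finCongr hij.symm) (finL i hi a) = Fin.castAdd l a := by
        simp [finL, Fin.ext_iff]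
      simp only [σ, Equiv.trans_apply, this, finSumFinEquiv_symm_apply_castAdd,
        finSumEquivOfFinset_inl]
    have hσR : ∀ a, σ (finR i hij a) = sᶜ.orderEmbOfFin (hcard s hs) a := by
      intro a
      have : (finCongr hij.symm) (finR i hij a) = Fin.natAdd i a := by
        simp [finR, Fin.ext_iff]
      simp only [σ, Equiv.trans_apply, this, finSumFinEquiv_symm_apply_natAdd,
        finSumEquivOfFinset_inr]
    refine ⟨σ, ?_, ?_⟩
    · simp only [shuffles, Finset.mem_filter, Finset.mem_univ, true_and]
      constructor
      · intro a b hab hb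
        rcases hLR a with ⟨a, rfl⟩ | ⟨a, rfl⟩
        · rcases hLR b with ⟨b, rfl⟩ | ⟨b, rfl⟩
          · rw [hσL, hσL]
            simpa [finL] using hab
          · simp [finR] at hb
        · simp [finR, Fin.lt_def] at hab; omega
      · intro a b hab ha
        rcases hLR a with ⟨a, rfl⟩ | ⟨a, rfl⟩
        · simp [finL] at ha; omega
        · rcases hLR b with ⟨b, rfl⟩ | ⟨b, rfl⟩
          · simp [finL, finR, Fin.lt_def] at hab; omega
          · rw [hσR, hσR]
            simpa [finR] using hab
    · apply Finset.eq_of_subset_of_card_le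
      · intro b hb
        simp only [S, Finset.mem_image, Finset.mem_univ, true_and] at hb
        obtain ⟨a, rfl⟩ := hb
        rw [hσL]
        exact Finset.orderEmbOfFin_mem _ _ _
      · rw [hs, hScard]
  · intro σ hσ
    exact hFG σ hσ (S σ) (hScard σ) (hcard _ (hScard σ)) (hSL σ) (hSR σ)

theorem Dt_mul {n j : ℕ} (f g : (Fin n → ℝ) → ℝ) (hf : ContDiff ℝ (j : ℕ∞) f)
    (hg : ContDiff ℝ (j : ℕ∞) g)
    (h1 : ∀ i : Fin (j + 1), (i : ℕ) ≤ j) (h2 : ∀ i : Fin (j + 1), (i : ℕ) + (j - (i : ℕ)) = j)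
    (ξ : Fin n → ℝ) (idx : Fin j → Fin n) :
    Dt n j (fun x => f x * g x) ξ idx =
        ∑ i : Fin (j + 1), ∑ σ ∈ shuffles j (i : ℕ),
          Dt n (i : ℕ) f ξ
              (fun a => idx (σ (finL (i : ℕ) (h1 i) a))) *
            Dt n (j - (i : ℕ)) g ξ
              (fun a => idx (σ (finR (i : ℕ) (h2 i) a))) := by
  unfold Dt
  rw [leibniz_finset j f g hf hg, ← Finset.powerset_univ, Finset.sum_powerset, Finset.card_univ,
    Fintype.card_fin, Finset.sum_range]
  apply Finset.sum_congr rfl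
  intro i _
  have hi : (i : ℕ) ≤ j := by have := i.isLt; omega
  have hij : (i : ℕ) + (j - i) = j := by omega
  symm
  apply sum_shuffles hij hi
  intro σ hσ s hs hsc hL hR
  simp only [shuffles, Finset.mem_filter] at hσ
  congr 1
  · refine PD_eq f (fun r => Pi.single (idx r) 1) s ξ hs (fun a => σ (finL i hi a)) ?_ hL
    intro a b hab
    exact hσ.2.1 _ _ hab b.2
  · refine PD_eq g (fun r => Pi.single (idx r) 1) sᶜ ξ hsc (fun a => σ (finR i hij a)) ?_ hR
    intro a b hab
    refine hσ.2.2 _ _ ?_ ?_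
    · simpa [finR] using hab
    · simp [finR]

theorem Dt_add {n j : ℕ} (f g : (Fin n → ℝ) → ℝ) (hf : ContDiff ℝ (j : ℕ∞) f)
    (hg : ContDiff ℝ (j : ℕ∞) g) (ξ : Fin n → ℝ) (idx : Fin j → Fin n) :
    Dt n j (fun x => f x + g x) ξ idx = Dt n j f ξ idx + Dt n j g ξ idx := by
  unfold Dt
  have := iteratedFDeriv_add_apply (i := j) (x := ξ) (hf.contDiffAt) (hg.contDiffAt)
  exact congrArg (fun T => T fun r => Pi.single (idx r) 1) this

theorem Dt_const_mul {n j : ℕ} (a : ℝ) (f : (Fin n → ℝ) → ℝ) (hf : ContDiff ℝ (j : ℕ∞) f)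
    (ξ : Fin n → ℝ) (idx : Fin j → Fin n) :
    Dt n j (fun x => a * f x) ξ idx = a * Dt n j f ξ idx := by
  unfold Dt
  have := iteratedFDeriv_const_smul_apply (i := j) (x := ξ) (a := a) (hf.contDiffAt)
  exact congrArg (fun T => T fun r => Pi.single (idx r) 1) this

theorem Dt_sum {n j : ℕ} {ι : Type*} (u : Finset ι) (f : ι → (Fin n → ℝ) → ℝ)
    (hf : ∀ i, ContDiff ℝ (j : ℕ∞) (f i)) (ξ : Fin n → ℝ) (idx : Fin j → Fin n) :
    Dt n j (fun x => ∑ i ∈ u, f i x) ξ idx = ∑ i ∈ u, Dt n j (f i) ξ idx := by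
  unfold Dt
  rw [iteratedFDeriv_sum (fun i _ => hf i)]
  simp

/-- For `j ≥ 1`, `h ∈ C^{j}(ℝⁿ;ℝ^p)`, symmetric `Q ∈ ℝ^{p×p}` and a
fixed vector `c ∈ ℝ^p`,
`D^j(x ↦ (c−h(x))ᵀ Q (c−h(x)))(ξ) = −2 · D^j h(ξ) *₁,₁ (Qc)
  + Σ_{i=0}^{j} Sym_{i,j−i}( D^i h(ξ) *₁,₁ ( Q *₂,₁ D^{j−i}h(ξ) ) )`,
stated entrywise for every multi-index `idx`. -/
theorem deriv_output_tracking_term {n p : ℕ} (j : ℕ) (hj : 1 ≤ j)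
    (h : (Fin n → ℝ) → Fin p → ℝ) (hh : ContDiff ℝ (j : ℕ∞) h)
    (Q : Matrix (Fin p) (Fin p) ℝ) (hQ : Q.IsSymm) (c : Fin p → ℝ)
    (ξ : Fin n → ℝ) (idx : Fin j → Fin n) :
    Dt n j (fun x => (c - h x) ⬝ᵥ Q.mulVec (c - h x)) ξ idx =
      (-2) * (∑ s : Fin p, Dt n j (fun x => h x s) ξ idx * Q.mulVec c s) +
        ∑ i : Fin (j + 1), ∑ σ ∈ shuffles j (i : ℕ), ∑ s : Fin p, ∑ r : Fin p,
          Dt n (i : ℕ) (fun x => h x s) ξ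
              (fun a => idx (σ (finL (i : ℕ) (by have := i.isLt; omega) a))) *
            Q s r *
            Dt n (j - (i : ℕ)) (fun x => h x r) ξ
              (fun a => idx (σ (finR (i : ℕ) (by have := i.isLt; omega) a))) := by
  have hs : ∀ s, ContDiff ℝ (j : ℕ∞) (fun x => h x s) := fun s => (contDiff_pi.1 hh) s
  have hexp : (fun x => (c - h x) ⬝ᵥ Q.mulVec (c - h x)) = fun x =>
      (c ⬝ᵥ Q.mulVec c + (-2) * ∑ s, Q.mulVec c s * h x s) +
        ∑ s, ∑ r, Q s r * (h x s * h x r) := by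
    funext x
    have h1 : c ⬝ᵥ Q.mulVec (h x) = h x ⬝ᵥ Q.mulVec c := by
      rw [Matrix.dotProduct_mulVec, ← Matrix.mulVec_transpose, hQ.eq, dotProduct_comm]
    have h2 : ∑ s, Q.mulVec c s * h x s = h x ⬝ᵥ Q.mulVec c := by
      simp [dotProduct, mul_comm]
    have h3 : ∑ s, ∑ r, Q s r * (h x s * h x r) = h x ⬝ᵥ Q.mulVec (h x) := by
      simp only [dotProduct, Matrix.mulVec, Finset.mul_sum]
      refine Finset.sum_congr rfl fun s _ => Finset.sum_congr rfl fun r _ => by ring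
    rw [h2, h3, Matrix.mulVec_sub, sub_dotProduct, dotProduct_sub, dotProduct_sub, h1]
    ring
  have c1 : ContDiff ℝ (j : ℕ∞) (fun x => ∑ s, Q.mulVec c s * h x s) :=
    ContDiff.sum fun s _ => contDiff_const.mul (hs s)
  have c2 : ∀ s r, ContDiff ℝ (j : ℕ∞) (fun x => h x s * h x r) := fun s r => (hs s).mul (hs r)
  have c3 : ∀ s, ContDiff ℝ (j : ℕ∞) (fun x => ∑ r, Q s r * (h x s * h x r)) := fun s =>
    ContDiff.sum fun r _ => contDiff_const.mul (c2 s r)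
  rw [hexp, Dt_add _ _ (contDiff_const.add (contDiff_const.mul c1)) (ContDiff.sum fun s _ => c3 s),
    Dt_add _ _ contDiff_const (contDiff_const.mul c1), Dt_const_mul _ _ c1,
    Dt_sum _ _ (fun s => contDiff_const.mul (hs s)), Dt_sum _ _ c3]
  have hz : Dt n j (fun _ => c ⬝ᵥ Q.mulVec c) ξ idx = 0 := by
    unfold Dt
    rw [iteratedFDeriv_const_of_ne (by omega)]
    rfl
  rw [hz, zero_add]
  congr 1
  · congr 1
    refine Finset.sum_congr rfl fun s _ => ?_
    rw [Dt_const_mul _ _ (hs s), mul_comm]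
  · have : ∀ s, Dt n j (fun x => ∑ r, Q s r * (h x s * h x r)) ξ idx = ∑ r,
        Q s r * Dt n j (fun x => h x s * h x r) ξ idx := by
      intro s
      rw [Dt_sum _ _ (fun r => contDiff_const.mul (c2 s r))]
      exact Finset.sum_congr rfl fun r _ => Dt_const_mul _ _ (c2 s r) _ _
    have H1 : ∀ i : Fin (j + 1), (i : ℕ) ≤ j := fun i => by have := i.isLt; omega
    have H2 : ∀ i : Fin (j + 1), (i : ℕ) + (j - (i : ℕ)) = j := fun i => by
      have := i.isLt; omega
    simp only [this, Dt_mul _ _ (hs _) (hs _) H1 H2, Finset.mul_sum]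
    rw [Finset.sum_congr rfl fun s _ => Finset.sum_comm]
    rw [Finset.sum_comm]
    refine Finset.sum_congr rfl fun i _ => ?_
    rw [Finset.sum_congr rfl fun s _ => Finset.sum_comm]
    rw [Finset.sum_comm]
    refine Finset.sum_congr rfl fun σ _ => Finset.sum_congr rfl fun s _ =>
      Finset.sum_congr rfl fun r _ => by ring
end

section
/- Let F: [0,T] → ℝ^{n×n} and H: [0,T] → ℝ^{p×n} be continuous, let G ∈ ℝ^{n×m}, let R ∈ ℝ^{m×m} and Q ∈ ℝ^{p×p} be symmetric positive definite, and let Γ ∈ ℝ^{n×n} be invertible. Suppose Π: [0,T] → ℝ^{n×n} is differentiable, Π(t) is invertible for every t, Π(0) = Γ, and Π′(t) = −F(t)ᵀ Π(t) − Π(t) F(t) − Π(t) G R⁻¹ Gᵀ Π(t) + H(t)ᵀ Q H(t) for all t ∈ [0,T]. Then Σ(t) := Π(t)⁻¹ is differentiable, Σ(0) = Γ⁻¹, and Σ′(t) = F(t) Σ(t) + Σ(t) F(t)ᵀ − Σ(t) H(t)ᵀ Q H(t) Σ(t) + G R⁻¹ Gᵀ for all t ∈ [0,T]. (With F(t) =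 J_f(x̂(t)) and H(t) = J_h(x̂(t)), this shows that when the third derivative of the value function and the second derivative of h vanish along the observer trajectory, the Riccati-type equation for the Hessian of the value function is equivalent to the covariance equation of the extended Kalman filter.) -/
open scoped BigOperators
open Matrix

section aux
attribute [local instance] Matrix.linftyOpNormedRing Matrix.linftyOpNormedAlgebra

theorem aux_inv_deriv {n : ℕ} (P : ℝ → Matrix (Fin n) (Fin n) ℝ)
    (P' : Matrix (Fin n) (Fin n) ℝ) (t : ℝ)
    (hP : ∀ a b : Fin n, HasDerivAt (fun s => P s a b) (P' a b) t)
    (hu : IsUnit (P t)) (a b : Fin n) :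
    HasDerivAt (fun s => (P s)⁻¹ a b) ((-((P t)⁻¹ * P' * (P t)⁻¹)) a b) t := by
  have h1 : HasDerivAt P P' t := by
    have h : HasDerivAt (fun s => ∑ i, ∑ j, P s i j • Matrix.single i j (1:ℝ))
        (∑ i, ∑ j, P' i j • Matrix.single i j (1:ℝ)) t := by
      refine HasDerivAt.fun_sum fun i _ => HasDerivAt.fun_sum fun j _ => ?_
      exact (hP i j).smul_const _
    have e : ∀ M : Matrix (Fin n) (Fin n) ℝ,
        ∑ i, ∑ j, M i j • Matrix.single i j (1:ℝ) = M := by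
      intro M
      conv_rhs => rw [Matrix.matrix_eq_sum_single M]
      simp [Matrix.smul_single]
    simpa only [e] using h
  obtain ⟨u, hu⟩ := hu
  have h2 := hasFDerivAt_ringInverse (𝕜 := ℝ) u
  rw [hu] at h2
  have h3 := h2.comp_hasDerivAt t h1
  have hui : (↑u⁻¹ : Matrix (Fin n) (Fin n) ℝ) = (P t)⁻¹ := by
    rw [← hu, Matrix.coe_units_inv]
  let L : Matrix (Fin n) (Fin n) ℝ →L[ℝ] ℝ :=
    LinearMap.toContinuousLinearMap (Matrix.entryLinearMap ℝ ℝ a b)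
  have h4 := L.hasFDerivAt.comp_hasDerivAt t h3
  have e1 : (fun s => (P s)⁻¹ a b) = L ∘ (Ring.inverse ∘ P) := by
    funext s
    simp [L, Matrix.nonsing_inv_eq_ringInverse]
  rw [e1]
  refine HasDerivAt.congr_deriv h4 ?_
  rw [hui]
  rfl

end aux

/-- equivalence of the Riccati equation for the Hessian and the
extended Kalman filter covariance equation. If `Π` solves
`Π′ = −FᵀΠ − ΠF − ΠGR⁻¹GᵀΠ + HᵀQH`, `Π(0) = Γ`, with `Π(t)` invertible on `[0,T]`,
then `Σ := Π⁻¹` is differentiable with `Σ(0) = Γ⁻¹` and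
`Σ′ = FΣ + ΣFᵀ − ΣHᵀQHΣ + GR⁻¹Gᵀ` on `[0,T]`. -/
theorem riccati_inverse_is_ekf_covariance {n m p : ℕ} (T : ℝ) (hT : 0 < T)
    (F : ℝ → Matrix (Fin n) (Fin n) ℝ) (H : ℝ → Matrix (Fin p) (Fin n) ℝ)
    (hF : ∀ a b : Fin n, ContinuousOn (fun t => F t a b) (Set.Icc 0 T))
    (hH : ∀ (a : Fin p) (b : Fin n), ContinuousOn (fun t => H t a b) (Set.Icc 0 T))
    (G : Matrix (Fin n) (Fin m) ℝ)
    (R : Matrix (Fin m) (Fin m) ℝ) (hR : R.PosDef)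
    (Q : Matrix (Fin p) (Fin p) ℝ) (hQ : Q.PosDef)
    (Γ : Matrix (Fin n) (Fin n) ℝ) (hΓ : IsUnit Γ)
    (Pm Pm' : ℝ → Matrix (Fin n) (Fin n) ℝ)
    (hPdiff : ∀ t ∈ Set.Icc (0 : ℝ) T, ∀ a b : Fin n,
      HasDerivAt (fun s => Pm s a b) (Pm' t a b) t)
    (hPinv : ∀ t ∈ Set.Icc (0 : ℝ) T, IsUnit (Pm t))
    (hP0 : Pm 0 = Γ)
    (hODE : ∀ t ∈ Set.Icc (0 : ℝ) T,
      Pm' t =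
        -(F t)ᵀ * Pm t - Pm t * F t - Pm t * G * R⁻¹ * Gᵀ * Pm t +
          (H t)ᵀ * Q * H t) :
    (Pm 0)⁻¹ = Γ⁻¹ ∧
      ∀ t ∈ Set.Icc (0 : ℝ) T, ∀ a b : Fin n,
        HasDerivAt (fun s => (Pm s)⁻¹ a b)
          ((F t * (Pm t)⁻¹ + (Pm t)⁻¹ * (F t)ᵀ -
              (Pm t)⁻¹ * (H t)ᵀ * Q * H t * (Pm t)⁻¹ + G * R⁻¹ * Gᵀ) a b) t := by
  refine ⟨by rw [hP0], fun t ht a b => ?_⟩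
  have h := aux_inv_deriv Pm (Pm' t) t (hPdiff t ht) (hPinv t ht) a b
  have hd : IsUnit (Pm t).det := (Matrix.isUnit_iff_isUnit_det _).1 (hPinv t ht)
  have h1 : (Pm t)⁻¹ * Pm t = 1 := Matrix.nonsing_inv_mul _ hd
  have h2 : Pm t * (Pm t)⁻¹ = 1 := Matrix.mul_nonsing_inv _ hd
  have h3 : ∀ {k : ℕ} (X : Matrix (Fin n) (Fin k) ℝ), (Pm t)⁻¹ * (Pm t * X) = X := by
    intro k X
    rw [← Matrix.mul_assoc, h1, Matrix.one_mul]
  refine h.congr_deriv (congrFun (congrFun (?_ : _ = _) a) b)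
  rw [hODE t ht]
  simp only [Matrix.mul_add, Matrix.add_mul, Matrix.mul_sub, Matrix.sub_mul, Matrix.mul_assoc,
    h2, h3, Matrix.mul_one, Matrix.neg_mul, Matrix.mul_neg]
  abel
end

section
/- Consider a linear system, i.e., f(ξ) = Aξ and h(ξ) = Cξ with A ∈ ℝ^{n×n} and C ∈ ℝ^{p×n}, and fix k ≥ 3. Suppose x̂_K: [0,T] → ℝⁿ and Σ: [0,T] → ℝ^{n×n} are differentiable, Σ(t) is invertible for all t, and they satisfy the Kalman filter equations x̂_K′(t) = A x̂_K(t) + Σ(t) Cᵀ Q ( y(t) − C x̂_K(t) ), x̂_K(0) = x₀, and Σ′(t) = A Σ(t) + Σ(t) Aᵀ − Σ(t) Cᵀ Q C Σ(t) + G R⁻¹ Gᵀ, Σ(0) = Γ⁻¹. Then x̂ := x̂_K, P₂ := Σ⁻¹, and P_j := 0 for 3 ≤ j ≤ k satisfy the higher order extended Kalman filter system: x̂′(t) = f(x̂(t)) + P₂(t)⁻¹ J_h(x̂(t))ᵀ Q (y(t) − h(x̂(t))); P₂′(t) = −J_f(x̂(t))ᵀ P₂(t) − P₂(t) J_f(x̂(t))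 − P₂(t) G R⁻¹ Gᵀ P₂(t) − R₂(t) − P₃(t) *_{1,1} ( P₂(t)⁻¹ J_h(x̂(t))ᵀ Q (y(t) − h(x̂(t))) ); for 3 ≤ j ≤ k−1: P_j′(t) = −Σ_{i=1}^{j} P_j(t) ×_i ( J_f(x̂(t)) + G R⁻¹ Gᵀ P₂(t) ) − R_j(t) − P_{j+1}(t) *_{1,1} ( P₂(t)⁻¹ J_h(x̂(t))ᵀ Q (y(t) − h(x̂(t))) ); P_k′(t) = −Σ_{i=1}^{k} P_k(t) ×_i ( J_f(x̂(t)) + G R⁻¹ Gᵀ P₂(t) ) − R_k(t); with x̂(0) = x₀, P₂(0) = Γ and P_j(0) = 0 for 3 ≤ j ≤ k, where for 2 ≤ ℓ ≤ k: R_ℓ(t) = Σ_{i=1}^{ℓ−2} Sym_{i,ℓ−i}( P_{i+1}(t) *_{1,1} D^{ℓ−i} f(x̂(t)) ) + ½ Σ_{i=2}^{ℓ−2} Sym_{i,ℓ−i}( P_{i+1}(t) *_{1,1} ( G R⁻¹ Gᵀ *_{2,1} P_{ℓ−i+1}(t) ) ) + D^ℓ h(x̂(t)) *_{1,1} ( Q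 (y(t) − h(x̂(t))) ) − ½ Σ_{i=1}^{ℓ−1} Sym_{i,ℓ−i}( D^i h(x̂(t)) *_{1,1} ( Q *_{2,1} D^{ℓ−i} h(x̂(t)) ) ). -/
open scoped BigOperators
open Matrix

/-- The tensor `R_ℓ(t)` of the higher order extended Kalman filter, for a family `P`
of tensors (`P j` of order `j`), stated entrywise. -/
noncomputable def RTen {n m p : ℕ} (G : Matrix (Fin n) (Fin m) ℝ)
    (R : Matrix (Fin m) (Fin m) ℝ) (Q : Matrix (Fin p) (Fin p) ℝ)
    (f : (Fin n → ℝ) → Fin n → ℝ) (h : (Fin n → ℝ) → Fin p → ℝ)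
    (yt : Fin p → ℝ) (P : (j : ℕ) → (Fin j → Fin n) → ℝ)
    (xt : Fin n → ℝ) (l : ℕ) (idx : Fin l → Fin n) : ℝ :=
  (∑ i : Fin (l - 2), ∑ σ ∈ shuffles l ((i : ℕ) + 1), ∑ s : Fin n,
      P ((i : ℕ) + 2)
          (Fin.cons s fun r : Fin ((i : ℕ) + 1) =>
            idx (σ (finL ((i : ℕ) + 1) (by have := i.isLt; omega) r))) *
        Dt n (l - ((i : ℕ) + 1)) (fun x => f x s) xt
          (fun r => idx (σ (finR ((i : ℕ) + 1) (by have := i.isLt; omega) r)))) +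
    (1 / 2) *
      (∑ i : Fin (l - 3), ∑ σ ∈ shuffles l ((i : ℕ) + 2), ∑ s : Fin n, ∑ r : Fin n,
        P ((i : ℕ) + 3)
            (Fin.cons s fun a : Fin ((i : ℕ) + 2) =>
              idx (σ (finL ((i : ℕ) + 2) (by have := i.isLt; omega) a))) *
          (G * R⁻¹ * Gᵀ) s r *
          P (l - ((i : ℕ) + 2) + 1)
            (Fin.cons r fun a : Fin (l - ((i : ℕ) + 2)) =>
              idx (σ (finR ((i : ℕ) + 2) (by have := i.isLt; omega) a)))) +
    (∑ s : Fin p, Dt n l (fun x => h x s) xt idx * Q.mulVec (yt - h xt) s) -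
    (1 / 2) *
      (∑ i : Fin (l - 1), ∑ σ ∈ shuffles l ((i : ℕ) + 1), ∑ s : Fin p, ∑ r : Fin p,
        Dt n ((i : ℕ) + 1) (fun x => h x s) xt
            (fun a => idx (σ (finL ((i : ℕ) + 1) (by have := i.isLt; omega) a))) *
          Q s r *
          Dt n (l - ((i : ℕ) + 1)) (fun x => h x r) xt
            (fun a => idx (σ (finR ((i : ℕ) + 1) (by have := i.isLt; omega) a))))

/-- The family of tensors `P_j` induced by the Kalman filter covariance `Σ`:
`P₂ = Σ⁻¹` (as an order-2 tensor) and `P_j = 0` for `j ≠ 2`. -/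
noncomputable def kalmanP (n : ℕ) (Sig : ℝ → Matrix (Fin n) (Fin n) ℝ) (t : ℝ)
    (j : ℕ) (idx : Fin j → Fin n) : ℝ :=
  if hj : j = 2 then (Sig t)⁻¹ (idx ⟨0, by omega⟩) (idx ⟨1, by omega⟩) else 0

theorem Dt_lin_hasFDeriv {n q : ℕ} (B : Matrix (Fin q) (Fin n) ℝ) (s : Fin q) (x : Fin n → ℝ) :
    HasFDerivAt (fun x : Fin n → ℝ => B.mulVec x s)
      ((ContinuousLinearMap.proj s).comp (Matrix.mulVecLin B).toContinuousLinearMap) x :=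
  ((ContinuousLinearMap.proj s).comp
    (Matrix.mulVecLin B).toContinuousLinearMap : (Fin n → ℝ) →L[ℝ] ℝ).hasFDerivAt

theorem Dt_lin_zero {n q : ℕ} (B : Matrix (Fin q) (Fin n) ℝ) (s : Fin q) (x : Fin n → ℝ)
    (l : ℕ) (hl : 2 ≤ l) (idx : Fin l → Fin n) :
    Dt n l (fun x => B.mulVec x s) x idx = 0 := by
  obtain ⟨l, rfl⟩ : ∃ l', l = l' + 1 + 1 := ⟨l - 2, by omega⟩
  unfold Dt
  rw [iteratedFDeriv_succ_apply_right]
  have : (fun y => fderiv ℝ (fun x : Fin n → ℝ => B.mulVec x s) y) = fun _ =>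
      ((ContinuousLinearMap.proj s).comp (Matrix.mulVecLin B).toContinuousLinearMap) := by
    funext y
    exact (Dt_lin_hasFDeriv B s y).fderiv
  rw [this, iteratedFDeriv_succ_const]
  rfl

theorem Dt_lin_one {n q : ℕ} (B : Matrix (Fin q) (Fin n) ℝ) (s : Fin q) (x : Fin n → ℝ)
    (idx : Fin 1 → Fin n) :
    Dt n 1 (fun x => B.mulVec x s) x idx = B s (idx 0) := by
  unfold Dt
  rw [iteratedFDeriv_one_apply, (Dt_lin_hasFDeriv B s x).fderiv]
  simp

theorem kalmanP_zero {n : ℕ} (Sig : ℝ → Matrix (Fin n) (Fin n) ℝ) (t : ℝ)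
    (j : ℕ) (hj : j ≠ 2) (idx : Fin j → Fin n) : kalmanP n Sig t j idx = 0 := by
  simp [kalmanP, hj]

theorem RTen_zero {n m p : ℕ} (G : Matrix (Fin n) (Fin m) ℝ)
    (R : Matrix (Fin m) (Fin m) ℝ) (Q : Matrix (Fin p) (Fin p) ℝ)
    (A : Matrix (Fin n) (Fin n) ℝ) (C : Matrix (Fin p) (Fin n) ℝ) (yt : Fin p → ℝ)
    (Sig : ℝ → Matrix (Fin n) (Fin n) ℝ) (t : ℝ) (xt : Fin n → ℝ) (l : ℕ) (hl : 3 ≤ l)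
    (idx : Fin l → Fin n) :
    RTen G R Q (fun ξ => A.mulVec ξ) (fun ξ => C.mulVec ξ) yt (kalmanP n Sig t) xt l idx = 0 := by
  have e1 : ∀ i : Fin (l - 2), 2 ≤ l - ((i : ℕ) + 1) := fun i => by have := i.isLt; omega
  unfold RTen
  rw [Finset.sum_eq_zero, Finset.sum_eq_zero (s := (Finset.univ : Finset (Fin (l - 3)))),
    Finset.sum_eq_zero (s := (Finset.univ : Finset (Fin p))),
    Finset.sum_eq_zero (s := (Finset.univ : Finset (Fin (l - 1))))]
  · simp
  · intro i _
    refine Finset.sum_eq_zero fun σ _ => Finset.sum_eq_zero fun s _ =>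
      Finset.sum_eq_zero fun r _ => ?_
    by_cases h : 2 ≤ (i : ℕ) + 1
    · rw [Dt_lin_zero C s xt _ h]; simp
    · rw [Dt_lin_zero C r xt (l - ((i : ℕ) + 1)) (by omega)]; simp
  · intro s _
    rw [Dt_lin_zero C s xt l (by omega)]; simp
  · intro i _
    refine Finset.sum_eq_zero fun σ _ => Finset.sum_eq_zero fun s _ =>
      Finset.sum_eq_zero fun r _ => ?_
    rw [kalmanP_zero Sig t ((i : ℕ) + 3) (by omega)]; simp
  · intro i _
    refine Finset.sum_eq_zero fun σ _ => Finset.sum_eq_zero fun s _ => ?_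
    rw [Dt_lin_zero A s xt _ (e1 i)]; simp

theorem shuffles_two : shuffles 2 1 = {1, Equiv.swap 0 1} := by
  decide

theorem RTen_two {n m p : ℕ} (G : Matrix (Fin n) (Fin m) ℝ)
    (R : Matrix (Fin m) (Fin m) ℝ) (Q : Matrix (Fin p) (Fin p) ℝ) (hQ : Qᵀ = Q)
    (A : Matrix (Fin n) (Fin n) ℝ) (C : Matrix (Fin p) (Fin n) ℝ) (yt : Fin p → ℝ)
    (Sig : ℝ → Matrix (Fin n) (Fin n) ℝ) (t : ℝ) (xt : Fin n → ℝ) (a b : Fin n) :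
    RTen G R Q (fun ξ => A.mulVec ξ) (fun ξ => C.mulVec ξ) yt (kalmanP n Sig t) xt 2 ![a, b]
      = -(Cᵀ * Q * C) a b := by
  unfold RTen
  have h3 : (∑ s : Fin p, Dt n 2 (fun x => C.mulVec x s) xt ![a, b] *
      Q.mulVec (yt - C.mulVec xt) s) = 0 :=
    Finset.sum_eq_zero fun s _ => by rw [Dt_lin_zero C s xt 2 le_rfl]; simp
  rw [h3]
  have h4 : ∀ u v : Fin n, ∑ s : Fin p, ∑ r : Fin p, C s u * Q s r * C r v
      = (Cᵀ * Q * C) u v := by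
    intro u v
    simp only [Matrix.mul_apply, Matrix.transpose_apply, Finset.sum_mul]
    rw [Finset.sum_comm]
  have h5 : (Cᵀ * Q * C) b a = (Cᵀ * Q * C) a b := by
    have h6 : (Cᵀ * Q * C)ᵀ = Cᵀ * Q * C := by
      rw [Matrix.transpose_mul, Matrix.transpose_mul, hQ, Matrix.transpose_transpose,
        Matrix.mul_assoc]
    exact congrFun (congrFun h6 a) b
  have key : (∑ i : Fin (2 - 1), ∑ σ ∈ shuffles 2 ((i : ℕ) + 1), ∑ s : Fin p, ∑ r : Fin p,
        Dt n ((i : ℕ) + 1) (fun x => C.mulVec x s) xt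
            (fun c => ![a, b] (σ (finL ((i : ℕ) + 1) (by have := i.isLt; omega) c))) *
          Q s r *
          Dt n (2 - ((i : ℕ) + 1)) (fun x => C.mulVec x r) xt
            (fun c => ![a, b] (σ (finR ((i : ℕ) + 1) (by have := i.isLt; omega) c))))
      = 2 * (Cᵀ * Q * C) a b := by
    have z : ∀ F : Fin (2 - 1) → ℝ, ∑ i, F i = F ⟨0, by omega⟩ := fun F => Fin.sum_univ_one F
    rw [z]
    change ∑ σ ∈ shuffles 2 1, ∑ s : Fin p, ∑ r : Fin p,
        Dt n 1 (fun x => C.mulVec x s) xt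
            (fun c => ![a, b] (σ (finL 1 _ c))) *
          Q s r *
          Dt n 1 (fun x => C.mulVec x r) xt
            (fun c => ![a, b] (σ (finR 1 _ c))) = _
    simp only [Dt_lin_one, h4]
    rw [shuffles_two, Finset.sum_pair (by decide)]
    change (Cᵀ * Q * C) a b + (Cᵀ * Q * C) b a = _
    rw [h5]; ring
  rw [key]
  have z1 : ∀ F : Fin (2 - 2) → ℝ, ∑ i, F i = 0 := fun F => Fin.sum_univ_zero F
  have z2 : ∀ F : Fin (2 - 3) → ℝ, ∑ i, F i = 0 := fun F => Fin.sum_univ_zero F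
  rw [z1, z2]
  ring

attribute [local instance] Matrix.linftyOpNormedRing Matrix.linftyOpNormedAlgebra in
theorem hasDerivAt_matInv {n : ℕ} (S : ℝ → Matrix (Fin n) (Fin n) ℝ)
    (S' : Matrix (Fin n) (Fin n) ℝ) (t : ℝ) (hu : IsUnit (S t))
    (h : ∀ a b, HasDerivAt (fun s => S s a b) (S' a b) t) (a b : Fin n) :
    HasDerivAt (fun s => (S s)⁻¹ a b) ((-((S t)⁻¹ * S' * (S t)⁻¹)) a b) t := by
  have h1 : HasDerivAt S S' t := by
    have : HasDerivAt (fun s => ∑ i, ∑ j, S s i j • Matrix.single i j (1 : ℝ))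
        (∑ i, ∑ j, S' i j • Matrix.single i j (1 : ℝ)) t :=
      HasDerivAt.fun_sum fun i _ => HasDerivAt.fun_sum fun j _ => (h i j).smul_const _
    have e : ∀ M : Matrix (Fin n) (Fin n) ℝ,
        ∑ i, ∑ j, M i j • Matrix.single i j (1 : ℝ) = M := by
      intro M
      conv_rhs => rw [Matrix.matrix_eq_sum_single M]
      simp
    simpa only [e] using this
  obtain ⟨u, hu⟩ := hu
  have h2 := hasFDerivAt_ringInverse (𝕜 := ℝ) u
  rw [hu] at h2
  have h3 := h2.comp_hasDerivAt t h1
  let L : Matrix (Fin n) (Fin n) ℝ →ₗ[ℝ] ℝ := Matrix.entryLinearMap ℝ ℝ a b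
  have h4 := L.toContinuousLinearMap.hasFDerivAt.comp_hasDerivAt t h3
  have hi : ((u⁻¹ : (Matrix (Fin n) (Fin n) ℝ)ˣ) : Matrix (Fin n) (Fin n) ℝ) = (S t)⁻¹ := by
    rw [← hu, Matrix.coe_units_inv]
  rw [hi] at h4
  have e1 : (fun s => (S s)⁻¹ a b) = (L.toContinuousLinearMap ∘ (Ring.inverse ∘ S)) := by
    funext s
    simp [L, Matrix.nonsing_inv_eq_ringInverse]
  rw [e1]
  have e2 : L.toContinuousLinearMap ((-((ContinuousLinearMap.mulLeftRight ℝ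
      (Matrix (Fin n) (Fin n) ℝ)) (S t)⁻¹) (S t)⁻¹) S') = (-((S t)⁻¹ * S' * (S t)⁻¹)) a b := by
    simp [L, ContinuousLinearMap.mulLeftRight_apply]
  rw [← e2]
  exact h4


/-- for linear systems, the Kalman filter solves the higher order
extended Kalman filter system of any order `k ≥ 3`, with `P₂ = Σ⁻¹` and `P_j = 0` for
`j ≥ 3`. -/
theorem kalman_solves_hoekf {n m p k : ℕ} (hk : 3 ≤ k) (T : ℝ) (hT : 0 < T)
    (G : Matrix (Fin n) (Fin m) ℝ)
    (R : Matrix (Fin m) (Fin m) ℝ) (hR : R.PosDef)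
    (Q : Matrix (Fin p) (Fin p) ℝ) (hQ : Q.PosDef)
    (Γ : Matrix (Fin n) (Fin n) ℝ) (hΓ : Γ.PosDef)
    (x₀ : Fin n → ℝ) (y : ℝ → Fin p → ℝ)
    (A : Matrix (Fin n) (Fin n) ℝ) (C : Matrix (Fin p) (Fin n) ℝ)
    (xhK : ℝ → Fin n → ℝ) (Sig : ℝ → Matrix (Fin n) (Fin n) ℝ)
    (hSinv : ∀ t ∈ Set.Icc (0 : ℝ) T, IsUnit (Sig t))
    (hxK : ∀ t ∈ Set.Icc (0 : ℝ) T,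
      HasDerivAt xhK
        (A.mulVec (xhK t) +
          (Sig t).mulVec (Cᵀ.mulVec (Q.mulVec (y t - C.mulVec (xhK t))))) t)
    (hxK0 : xhK 0 = x₀)
    (hS : ∀ t ∈ Set.Icc (0 : ℝ) T, ∀ a b : Fin n,
      HasDerivAt (fun s => Sig s a b)
        ((A * Sig t + Sig t * Aᵀ - Sig t * Cᵀ * Q * C * Sig t + G * R⁻¹ * Gᵀ) a b) t)
    (hS0 : Sig 0 = Γ⁻¹) :
    -- the observer equation of the HOEKF, with P₂ = Σ⁻¹, J_h = C, h(ξ) = Cξ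
    (∀ t ∈ Set.Icc (0 : ℝ) T,
      HasDerivAt xhK
        (A.mulVec (xhK t) +
          ((Sig t)⁻¹)⁻¹.mulVec (Cᵀ.mulVec (Q.mulVec (y t - C.mulVec (xhK t))))) t) ∧
    -- the Riccati-type equation for P₂ = Σ⁻¹
    (∀ t ∈ Set.Icc (0 : ℝ) T, ∀ a b : Fin n,
      HasDerivAt (fun s => (Sig s)⁻¹ a b)
        ((-Aᵀ * (Sig t)⁻¹ - (Sig t)⁻¹ * A -
            (Sig t)⁻¹ * (G * R⁻¹ * Gᵀ) * (Sig t)⁻¹ -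
            Matrix.of (fun a' b' : Fin n =>
              RTen G R Q (fun ξ => A.mulVec ξ) (fun ξ => C.mulVec ξ) (y t)
                (kalmanP n Sig t) (xhK t) 2 ![a', b']) -
            Matrix.of (fun a' b' : Fin n =>
              ∑ s : Fin n,
                kalmanP n Sig t 3 ![s, a', b'] *
                  (((Sig t)⁻¹)⁻¹.mulVec
                    (Cᵀ.mulVec (Q.mulVec (y t - C.mulVec (xhK t))))) s)) a b) t) ∧
    -- the generalized differential Lyapunov equations for P_j = 0, 3 ≤ j ≤ k−1
    (∀ j : ℕ, 3 ≤ j → j ≤ k - 1 → ∀ t ∈ Set.Icc (0 : ℝ) T, ∀ idx : Fin j → Fin n,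
      HasDerivAt (fun s => kalmanP n Sig s j idx)
        (-(∑ i : Fin j, ∑ kv : Fin n,
              kalmanP n Sig t j (Function.update idx i kv) *
                (A + G * R⁻¹ * Gᵀ * (Sig t)⁻¹) kv (idx i)) -
          RTen G R Q (fun ξ => A.mulVec ξ) (fun ξ => C.mulVec ξ) (y t)
            (kalmanP n Sig t) (xhK t) j idx -
          ∑ s : Fin n,
            kalmanP n Sig t (j + 1) (Fin.cons s idx) *
              (((Sig t)⁻¹)⁻¹.mulVec
                (Cᵀ.mulVec (Q.mulVec (y t - C.mulVec (xhK t))))) s) t) ∧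
    -- the terminal generalized differential Lyapunov equation for P_k = 0
    (∀ t ∈ Set.Icc (0 : ℝ) T, ∀ idx : Fin k → Fin n,
      HasDerivAt (fun s => kalmanP n Sig s k idx)
        (-(∑ i : Fin k, ∑ kv : Fin n,
              kalmanP n Sig t k (Function.update idx i kv) *
                (A + G * R⁻¹ * Gᵀ * (Sig t)⁻¹) kv (idx i)) -
          RTen G R Q (fun ξ => A.mulVec ξ) (fun ξ => C.mulVec ξ) (y t)
            (kalmanP n Sig t) (xhK t) k idx) t) ∧
    -- initial conditions
    xhK 0 = x₀ ∧
    (Sig 0)⁻¹ = Γ ∧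
    (∀ j : ℕ, 3 ≤ j → j ≤ k → ∀ idx : Fin j → Fin n,
      kalmanP n Sig 0 j idx = 0) := by
  have hii : ∀ t ∈ Set.Icc (0 : ℝ) T, ((Sig t)⁻¹)⁻¹ = Sig t := fun t ht =>
    Matrix.nonsing_inv_nonsing_inv _ ((Matrix.isUnit_iff_isUnit_det _).1 (hSinv t ht))
  have hQt : Qᵀ = Q := by
    have := hQ.isHermitian.eq
    rwa [Matrix.conjTranspose_eq_transpose_of_trivial] at this
  refine ⟨?_, ?_, ?_, ?_, hxK0, ?_, ?_⟩
  · intro t ht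
    rw [hii t ht]
    exact hxK t ht
  · intro t ht a b
    have hd := hasDerivAt_matInv Sig _ t (hSinv t ht) (hS t ht) a b
    have hdet := (Matrix.isUnit_iff_isUnit_det _).1 (hSinv t ht)
    convert hd using 1
    have hR2 : Matrix.of (fun a' b' : Fin n =>
              RTen G R Q (fun ξ => A.mulVec ξ) (fun ξ => C.mulVec ξ) (y t)
                (kalmanP n Sig t) (xhK t) 2 ![a', b']) = -(Cᵀ * Q * C) := by
      ext a' b'
      simp [RTen_two G R Q hQt]
    have hP3 : Matrix.of (fun a' b' : Fin n =>
              ∑ s : Fin n,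
                kalmanP n Sig t 3 ![s, a', b'] *
                  (((Sig t)⁻¹)⁻¹.mulVec
                    (Cᵀ.mulVec (Q.mulVec (y t - C.mulVec (xhK t))))) s) = 0 := by
      ext a' b'
      simp [kalmanP_zero Sig t 3]
    rw [hR2, hP3]
    refine congrFun (congrFun (?_ : (_ : Matrix (Fin n) (Fin n) ℝ) = _) a) b
    have i1 : (Sig t)⁻¹ * Sig t = 1 := Matrix.nonsing_inv_mul _ hdet
    have i2 : Sig t * (Sig t)⁻¹ = 1 := Matrix.mul_nonsing_inv _ hdet
    generalize (Sig t)⁻¹ = V at *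
    generalize Sig t = S at *
    generalize G * R⁻¹ * Gᵀ = W at *
    have c1 : V * (A * S) * V = V * A := by
      rw [Matrix.mul_assoc, Matrix.mul_assoc, i2, Matrix.mul_one]
    have c2 : V * (S * Aᵀ) * V = Aᵀ * V := by
      rw [← Matrix.mul_assoc, i1, Matrix.one_mul]
    have c3 : V * (S * Cᵀ * Q * C * S) * V = Cᵀ * Q * C := by
      calc V * (S * Cᵀ * Q * C * S) * V = (V * S) * (Cᵀ * Q * C) * (S * V) := by
            simp only [Matrix.mul_assoc]
        _ = _ := by rw [i1, i2, Matrix.one_mul, Matrix.mul_one]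
    simp only [Matrix.mul_add, Matrix.add_mul, Matrix.mul_sub, Matrix.sub_mul, c1, c2, c3,
      Matrix.neg_mul]
    abel
  · intro j hj _ t ht idx
    simp only [RTen_zero G R Q A C _ Sig t _ j hj, kalmanP_zero Sig _ j (by omega),
      kalmanP_zero Sig _ (j + 1) (by omega)]
    simpa using hasDerivAt_const t (0 : ℝ)
  · intro t ht idx
    simp only [RTen_zero G R Q A C _ Sig t _ k hk, kalmanP_zero Sig _ k (by omega)]
    simpa using hasDerivAt_const t (0 : ℝ)
  · rw [hS0]
    exact Matrix.nonsing_inv_nonsing_inv _ ((Matrix.isUnit_iff_isUnit_det _).1 hΓ.isUnit)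
  · intro j hj _ idx
    exact kalmanP_zero Sig 0 j (by omega) idx
end
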